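/- arXiv:2409.04986 — 2 statements merged into one kernel-verified Lean document; each statement's English description precedes it below -/
import Mathlib

section
/- Theorem 1 (convergence of three-client DynamicFL): Let η ∈ (0,1), let k ≥ 1 be the number of high-frequency local steps per round and r ≥ 0 the number of rounds. Define the DynamicFL iteration as follows: at round t (with current parameter θ_{t-1}), the high-frequency group iterate is θ_{1&2,0} = θ_{t-1} and for ℓ = 1,…,k, θ_{1&2,ℓ} = Σ_{i=1}^{2} (n_i/(n_1+n_2))·( θ_{1&2,ℓ-1} − η(θ_{1&2,ℓ-1} − z̄_i) ); client 3's iterate is θ_{3,0} = θ_{t-1} and θ_{3,ℓ} = θ_{3,ℓ-1} − η(θ_{3,ℓ-1} − z̄_3) for ℓ = 1,…,k; and the round ends with θ_t = ((n_1+n_2)/n)·θ_{1&2,k} + (n_3/n)·θ_{3,k}. Then for every initial θ_0 ∈ ℝ, after r rounds the parameter satisfies θ_r = θ* + (1−η)^{k·r}·(θ_0 − θ*), where θ* = Σ_{i=1}^{3} λ_i z̄_i. -/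
/-! On a quadratic loss of curvature one with minimiser `c`, a gradient step of rate `η` is the
homothety of centre `c` and ratio `1 - η`. Homotheties with a common centre compose by multiplying
ratios, and an affine combination of homotheties with a common ratio is the homothety of that ratio
about the combined centre. So the high-frequency group acts as one client centred at its pooled
mean, a whole round is a homothety of ratio `(1 - η) ^ k`, and its centre is `θ*` because the pooled
mean enters with the total weight of its group. -/

open AffineMap

section Homothety

variable {R E : Type*} [CommRing R] [AddCommGroup E] [Module R E]

theorem sub_smul_sub_eq_homothety (η : R) (c x : E) :
    x - η • (x - c) = homothety c (1 - η) x := by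
  simp only [homothety_apply, vsub_eq_sub, vadd_eq_add]
  module

theorem smul_homothety_add_smul_homothety {a b : R} (hab : a + b = 1) (ρ : R) (c d x : E) :
    a • homothety c ρ x + b • homothety d ρ x = homothety (a • c + b • d) ρ x := by
  obtain rfl := eq_sub_of_add_eq hab
  simp only [homothety_apply, vsub_eq_sub, vadd_eq_add]
  module

end Homothety

theorem eq_homothety_pow_of_succ_eq_homothety {R V P : Type*} [CommRing R] [AddCommGroup V]
    [Module R V] [AddTorsor V P] {c : P} {ρ : R} {u : ℕ → P} {k : ℕ}
    (hu : ∀ ℓ < k, u (ℓ + 1) = homothety c ρ (u ℓ)) :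
    u k = homothety c (ρ ^ k) (u 0) := by
  induction k with
  | zero => simp
  | succ k ih =>
    rw [hu k k.lt_succ_self, ih fun ℓ hℓ => hu ℓ (hℓ.trans k.lt_succ_self), pow_succ',
      homothety_mul_apply]

theorem add_div_smul_weightedMean {K E : Type*} [Field K] [AddCommGroup E] [Module K E]
    {a b : K} (hab : a + b ≠ 0) (s : K) (c d : E) :
    ((a + b) / s) • ((a / (a + b)) • c + (b / (a + b)) • d) = (a / s) • c + (b / s) • d := by
  simp only [smul_add, smul_smul, div_mul_div_comm, mul_comm s, mul_div_mul_left _ _ hab]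

theorem dynamicFL_convergence_general {K E : Type*} [Field K] [AddCommGroup E] [Module K E]
    {w₁ w₂ w₃ : K} (hw₁₂ : w₁ + w₂ ≠ 0) (hw : w₁ + w₂ + w₃ ≠ 0)
    {c₁ c₂ c₃ θstar : E}
    (hθstar : θstar = (w₁ / (w₁ + w₂ + w₃)) • c₁ + (w₂ / (w₁ + w₂ + w₃)) • c₂
      + (w₃ / (w₁ + w₂ + w₃)) • c₃)
    {η : K} {k : ℕ} {θ : ℕ → E} {θ₁₂ θ₃ : ℕ → ℕ → E}
    (init₁₂ : ∀ t, θ₁₂ t 0 = θ t) (init₃ : ∀ t, θ₃ t 0 = θ t)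
    (step₁₂ : ∀ t, ∀ ℓ < k, θ₁₂ t (ℓ + 1) =
      (w₁ / (w₁ + w₂)) • (θ₁₂ t ℓ - η • (θ₁₂ t ℓ - c₁))
        + (w₂ / (w₁ + w₂)) • (θ₁₂ t ℓ - η • (θ₁₂ t ℓ - c₂)))
    (step₃ : ∀ t, ∀ ℓ < k, θ₃ t (ℓ + 1) = θ₃ t ℓ - η • (θ₃ t ℓ - c₃))
    (aggregate : ∀ t, θ (t + 1) =
      ((w₁ + w₂) / (w₁ + w₂ + w₃)) • θ₁₂ t k + (w₃ / (w₁ + w₂ + w₃)) • θ₃ t k)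
    (r : ℕ) :
    θ r = θstar + (1 - η) ^ (k * r) • (θ 0 - θstar) := by
  simp only [sub_smul_sub_eq_homothety] at step₁₂ step₃
  have group_weights : w₁ / (w₁ + w₂) + w₂ / (w₁ + w₂) = 1 := by rw [← add_div, div_self hw₁₂]
  have server_weights : (w₁ + w₂) / (w₁ + w₂ + w₃) + w₃ / (w₁ + w₂ + w₃) = 1 := by
    rw [← add_div, div_self hw]
  simp only [smul_homothety_add_smul_homothety group_weights] at step₁₂
  have round (t : ℕ) : θ (t + 1) = homothety θstar ((1 - η) ^ k) (θ t) := by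
    rw [aggregate, eq_homothety_pow_of_succ_eq_homothety (step₁₂ t),
      eq_homothety_pow_of_succ_eq_homothety (step₃ t), init₁₂, init₃,
      smul_homothety_add_smul_homothety server_weights, add_div_smul_weightedMean hw₁₂, ← hθstar]
  rw [eq_homothety_pow_of_succ_eq_homothety fun t _ => round t, ← pow_mul, homothety_apply,
    vsub_eq_sub, vadd_eq_add, add_comm]

/-- **Theorem 1 (convergence of three-client DynamicFL).**
With learning rate `η ∈ (0,1)`, `k ≥ 1` high-frequency local steps per round,
three clients holding `n_i ≥ 1` data points with empirical means `z̄_i`,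
the DynamicFL iterate after `r` rounds satisfies
`θ_r = θ* + (1−η)^(k·r) · (θ_0 − θ*)`, where `θ* = Σ λ_i z̄_i`. -/
theorem dynamicFL_convergence
    (n1 n2 n3 : ℕ) (hn1 : 1 ≤ n1) (hn2 : 1 ≤ n2) (hn3 : 1 ≤ n3)
    (z1 z2 z3 : ℕ → ℝ)
    (zbar1 zbar2 zbar3 : ℝ)
    (hz1 : zbar1 = (∑ j ∈ Finset.range n1, z1 j) / n1)
    (hz2 : zbar2 = (∑ j ∈ Finset.range n2, z2 j) / n2)
    (hz3 : zbar3 = (∑ j ∈ Finset.range n3, z3 j) / n3)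
    (θstar : ℝ)
    (hθstar : θstar = ((n1 : ℝ) / (n1 + n2 + n3)) * zbar1
        + ((n2 : ℝ) / (n1 + n2 + n3)) * zbar2
        + ((n3 : ℝ) / (n1 + n2 + n3)) * zbar3)
    (η : ℝ) (hη0 : 0 < η) (hη1 : η < 1)
    (k : ℕ) (hk : 1 ≤ k)
    (θ : ℕ → ℝ)
    (θ12 θ3 : ℕ → ℕ → ℝ)
    -- at the beginning of round `t+1` (current parameter `θ t`) both groups start from `θ t`
    (h12init : ∀ t : ℕ, θ12 t 0 = θ t)
    (h3init : ∀ t : ℕ, θ3 t 0 = θ t)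
    -- high-frequency group: one local step and immediate weighted aggregation, for ℓ = 1,…,k
    (h12step : ∀ t : ℕ, ∀ ℓ < k,
        θ12 t (ℓ + 1) =
          ((n1 : ℝ) / (n1 + n2)) * (θ12 t ℓ - η * (θ12 t ℓ - zbar1))
          + ((n2 : ℝ) / (n1 + n2)) * (θ12 t ℓ - η * (θ12 t ℓ - zbar2)))
    -- client 3: k local gradient-descent steps
    (h3step : ∀ t : ℕ, ∀ ℓ < k,
        θ3 t (ℓ + 1) = θ3 t ℓ - η * (θ3 t ℓ - zbar3))
    -- server aggregation at the end of the round
    (hagg : ∀ t : ℕ,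
        θ (t + 1) = (((n1 : ℝ) + n2) / (n1 + n2 + n3)) * θ12 t k
          + ((n3 : ℝ) / (n1 + n2 + n3)) * θ3 t k) :
    ∀ r : ℕ, θ r = θstar + (1 - η) ^ (k * r) * (θ 0 - θstar) := by
  exact dynamicFL_convergence_general (K := ℝ) (by positivity) (by positivity) hθstar h12init
    h3init h12step h3step hagg
end

section
/- Geometric error contraction and convergence: Under the three-client DynamicFL iteration with learning rate η ∈ (0,1), k ≥ 1 high-frequency steps per round, and initial parameter θ_0 ∈ ℝ, the error satisfies |θ_r − θ*| = (1−η)^{k·r}·|θ_0 − θ*| for every r ≥ 0, and hence θ_r → θ* as r → ∞. -/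
/-!
A gradient step for `½‖x - c‖²` is jointly linear in the target `c` and the point `x`. Hence, within
a round, the size-weighted average of the group iterate and of client 3's iterate performs gradient
descent towards the pooled target `θ*`, although no client knows `θ*`. Each step multiplies the
error of this average by exactly `1 - η`, so a round of `k` steps multiplies it by `(1 - η) ^ k`.
-/

open Filter Topology

theorem eq_pow_smul_of_forall_lt_succ_eq_smul {M α : Type*} [Monoid M] [MulAction M α]
    {q : M} {u : ℕ → α} {k : ℕ} (h : ∀ ℓ < k, u (ℓ + 1) = q • u ℓ) : u k = q ^ k • u 0 := by
  induction k with
  | zero => rw [pow_zero, one_smul]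
  | succ k ih =>
    rw [h k k.lt_succ_self, ih fun ℓ hℓ => h ℓ (hℓ.trans k.lt_succ_self), pow_succ', mul_smul]

section GradientStep

variable {R E : Type*} [CommRing R] [AddCommGroup E] [Module R E]

/-- The gradient descent step of learning rate `η` from `x` for the quadratic loss `½‖x - c‖²`,
whose gradient at `x` is `x - c`. For a client with empirical mean `c` this is its local update; the
definition uses only the gradient, so no norm is needed. -/
def gradientStep (η : R) (c x : E) : E := x - η • (x - c)

theorem gradientStep_sub_target (η : R) (c x : E) :
    gradientStep η c x - c = (1 - η) • (x - c) := by
  unfold gradientStep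
  module

theorem smul_gradientStep_add_smul_gradientStep (a b η : R) (c d x y : E) :
    a • gradientStep η c x + b • gradientStep η d y =
      gradientStep η (a • c + b • d) (a • x + b • y) := by
  unfold gradientStep
  module

theorem sub_target_eq_pow_smul_of_gradientStep {η : R} {c : E} {x : ℕ → E} {k : ℕ}
    (h : ∀ ℓ < k, x (ℓ + 1) = gradientStep η c (x ℓ)) :
    x k - c = (1 - η) ^ k • (x 0 - c) :=
  eq_pow_smul_of_forall_lt_succ_eq_smul (u := fun ℓ => x ℓ - c) fun ℓ hℓ => by
    rw [h ℓ hℓ, gradientStep_sub_target]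

theorem combo_sub_target_eq_pow_smul_of_gradientStep {a b : R} (hab : a + b = 1) {η : R}
    {c d p : E} {x y : ℕ → E} {k : ℕ} (hx₀ : x 0 = p) (hy₀ : y 0 = p)
    (hx : ∀ ℓ < k, x (ℓ + 1) = gradientStep η c (x ℓ))
    (hy : ∀ ℓ < k, y (ℓ + 1) = gradientStep η d (y ℓ)) :
    a • x k + b • y k - (a • c + b • d) = (1 - η) ^ k • (p - (a • c + b • d)) := by
  have hstep : ∀ ℓ < k, a • x (ℓ + 1) + b • y (ℓ + 1) =
      gradientStep η (a • c + b • d) (a • x ℓ + b • y ℓ) := fun ℓ hℓ => by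
    rw [hx ℓ hℓ, hy ℓ hℓ, smul_gradientStep_add_smul_gradientStep]
  have hstart : a • x 0 + b • y 0 = p := by rw [hx₀, hy₀, Convex.combo_self hab]
  rw [← hstart]
  exact sub_target_eq_pow_smul_of_gradientStep (x := fun ℓ => a • x ℓ + b • y ℓ) hstep

end GradientStep

theorem weighted_sum_eq_smul_group_mean_add {𝕜 E : Type*} [Field 𝕜] [AddCommGroup E] [Module 𝕜 E]
    {w₁ w₂ : 𝕜} (h₁₂ : w₁ + w₂ ≠ 0) (w₃ s : 𝕜) (c₁ c₂ c₃ : E) :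
    (w₁ / s) • c₁ + (w₂ / s) • c₂ + (w₃ / s) • c₃ =
      ((w₁ + w₂) / s) • ((w₁ / (w₁ + w₂)) • c₁ + (w₂ / (w₁ + w₂)) • c₂) + (w₃ / s) • c₃ := by
  rw [smul_add, smul_smul, smul_smul, mul_comm, div_mul_div_cancel₀ h₁₂, mul_comm,
    div_mul_div_cancel₀ h₁₂]

theorem tendsto_of_sub_eq_pow_smul {𝕜 E : Type*} [NormedField 𝕜] [AddCommGroup E] [Module 𝕜 E]
    [TopologicalSpace E] [ContinuousAdd E] [ContinuousSMul 𝕜 E] {q : 𝕜} (hq : ‖q‖ < 1)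
    {u : ℕ → E} {a v : E} (h : ∀ r, u r - a = q ^ r • v) : Tendsto u atTop (𝓝 a) := by
  have hlim : Tendsto (fun r => q ^ r • v + a) atTop (𝓝 ((0 : 𝕜) • v + a)) :=
    ((tendsto_pow_atTop_nhds_zero_of_norm_lt_one hq).smul_const v).add_const a
  rw [zero_smul, zero_add] at hlim
  exact hlim.congr fun r => (sub_eq_iff_eq_add.mp (h r)).symm

theorem dynamicFL_geometric_contraction_and_convergence_general
    {𝕜 E : Type*} [NormedField 𝕜] [AddCommGroup E] [Module 𝕜 E]
    [TopologicalSpace E] [ContinuousAdd E] [ContinuousSMul 𝕜 E]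
    {w₁ w₂ w₃ : 𝕜} (h₁₂ : w₁ + w₂ ≠ 0) (h₁₂₃ : w₁ + w₂ + w₃ ≠ 0)
    {c₁ c₂ c₃ θstar : E}
    (hθstar : θstar = (w₁ / (w₁ + w₂ + w₃)) • c₁ + (w₂ / (w₁ + w₂ + w₃)) • c₂
      + (w₃ / (w₁ + w₂ + w₃)) • c₃)
    {η : 𝕜} {k : ℕ} {θ : ℕ → E} {θ₁₂ θ₃ : ℕ → ℕ → E}
    (h₁₂init : ∀ t, θ₁₂ t 0 = θ t) (h₃init : ∀ t, θ₃ t 0 = θ t)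
    (h₁₂step : ∀ t, ∀ ℓ < k, θ₁₂ t (ℓ + 1) = (w₁ / (w₁ + w₂)) • gradientStep η c₁ (θ₁₂ t ℓ)
      + (w₂ / (w₁ + w₂)) • gradientStep η c₂ (θ₁₂ t ℓ))
    (h₃step : ∀ t, ∀ ℓ < k, θ₃ t (ℓ + 1) = gradientStep η c₃ (θ₃ t ℓ))
    (hagg : ∀ t, θ (t + 1) = ((w₁ + w₂) / (w₁ + w₂ + w₃)) • θ₁₂ t k
      + (w₃ / (w₁ + w₂ + w₃)) • θ₃ t k) :
    (∀ r, θ r - θstar = (1 - η) ^ (k * r) • (θ 0 - θstar)) ∧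
      (k ≠ 0 → ‖1 - η‖ < 1 → Tendsto θ atTop (𝓝 θstar)) := by
  have hgroup : w₁ / (w₁ + w₂) + w₂ / (w₁ + w₂) = 1 := by rw [← add_div, div_self h₁₂]
  have htotal : (w₁ + w₂) / (w₁ + w₂ + w₃) + w₃ / (w₁ + w₂ + w₃) = 1 := by
    rw [← add_div, div_self h₁₂₃]
  have hround (t : ℕ) : θ (t + 1) - θstar = (1 - η) ^ k • (θ t - θstar) := by
    rw [hagg, hθstar, weighted_sum_eq_smul_group_mean_add h₁₂]
    refine combo_sub_target_eq_pow_smul_of_gradientStep htotal (h₁₂init t) (h₃init t)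
      (fun ℓ hℓ => ?_) (h₃step t)
    rw [h₁₂step t ℓ hℓ, smul_gradientStep_add_smul_gradientStep, Convex.combo_self hgroup]
  have herror (r : ℕ) : θ r - θstar = ((1 - η) ^ k) ^ r • (θ 0 - θstar) :=
    eq_pow_smul_of_forall_lt_succ_eq_smul (u := fun t => θ t - θstar) fun t _ => hround t
  refine ⟨fun r => by rw [pow_mul, herror], fun hk hη => tendsto_of_sub_eq_pow_smul ?_ herror⟩
  rw [norm_pow]
  exact pow_lt_one₀ (norm_nonneg _) hη hk

/-- **Geometric error contraction and convergence.** Under the three-client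
DynamicFL iteration with `η ∈ (0,1)` and `k ≥ 1` high-frequency steps per round,
`|θ_r − θ*| = (1−η)^(k·r) |θ_0 − θ*|` for every `r`, and hence `θ_r → θ*`. -/
theorem dynamicFL_geometric_contraction_and_convergence
    (n1 n2 n3 : ℕ) (hn1 : 1 ≤ n1) (hn2 : 1 ≤ n2) (hn3 : 1 ≤ n3)
    (z1 z2 z3 : ℕ → ℝ)
    (zbar1 zbar2 zbar3 : ℝ)
    (hz1 : zbar1 = (∑ j ∈ Finset.range n1, z1 j) / n1)
    (hz2 : zbar2 = (∑ j ∈ Finset.range n2, z2 j) / n2)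
    (hz3 : zbar3 = (∑ j ∈ Finset.range n3, z3 j) / n3)
    (θstar : ℝ)
    (hθstar : θstar = ((n1 : ℝ) / (n1 + n2 + n3)) * zbar1
        + ((n2 : ℝ) / (n1 + n2 + n3)) * zbar2
        + ((n3 : ℝ) / (n1 + n2 + n3)) * zbar3)
    (η : ℝ) (hη0 : 0 < η) (hη1 : η < 1)
    (k : ℕ) (hk : 1 ≤ k)
    (θ : ℕ → ℝ)
    (θ12 θ3 : ℕ → ℕ → ℝ)
    (h12init : ∀ t : ℕ, θ12 t 0 = θ t)
    (h3init : ∀ t : ℕ, θ3 t 0 = θ t)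
    (h12step : ∀ t : ℕ, ∀ ℓ < k,
        θ12 t (ℓ + 1) =
          ((n1 : ℝ) / (n1 + n2)) * (θ12 t ℓ - η * (θ12 t ℓ - zbar1))
          + ((n2 : ℝ) / (n1 + n2)) * (θ12 t ℓ - η * (θ12 t ℓ - zbar2)))
    (h3step : ∀ t : ℕ, ∀ ℓ < k,
        θ3 t (ℓ + 1) = θ3 t ℓ - η * (θ3 t ℓ - zbar3))
    (hagg : ∀ t : ℕ,
        θ (t + 1) = (((n1 : ℝ) + n2) / (n1 + n2 + n3)) * θ12 t k
          + ((n3 : ℝ) / (n1 + n2 + n3)) * θ3 t k) :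
    (∀ r : ℕ, |θ r - θstar| = (1 - η) ^ (k * r) * |θ 0 - θstar|) ∧
      Filter.Tendsto θ Filter.atTop (nhds θstar) := by
  obtain ⟨herror, hlim⟩ := dynamicFL_geometric_contraction_and_convergence_general (𝕜 := ℝ)
    (by positivity) (by positivity) hθstar h12init h3init h12step h3step hagg
  have hη : |1 - η| = 1 - η := abs_of_pos (sub_pos.mpr hη1)
  exact ⟨fun r => by rw [herror, smul_eq_mul, abs_mul, abs_pow, hη],
    hlim (Nat.one_le_iff_ne_zero.mp hk) (hη.trans_lt (sub_lt_self 1 hη0))⟩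
end
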